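/- Let R be a ring and let E^{p,q} be R-modules indexed by pairs of integers (p,q), such that for each p the modules E^{p,q} vanish for q outside a fixed finite range. Let u = (u^{p,q} : E^{p,q} → E^{p,q+2}) be a family of R-linear maps and n an integer, and assume that for every p and every i ≥ 0 the i-fold composite u^i : E^{p,n-i} → E^{p,n+i} is an isomorphism. Let r ≥ 2 be an integer and let d = (d^{p,q} : E^{p,q} → E^{p+r,q-r+1}) be a family of R-linear maps commuting with u, i.e. u^{p+r,q-r+1} ∘ d^{p,q} = d^{p,q+2} ∘ u^{p,q} for all p, q. Then d^{p,q} = 0 for all p, q. -/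

import Mathlib

/-!
The vanishing-of-differentials argument in the proof of Theorem 3.2 of the paper:
differentials `d_r` (`r ≥ 2`) of a spectral sequence commuting with a Lefschetz operator
`u` (which is an isomorphism `u^i : E^{p,n-i} ≅ E^{p,n+i}` in the second index) vanish.
-/

variable {R : Type*} [Ring R]

/-- Transport of a module along an equality of indices. -/
def castHom (A : ℤ → Type*) [∀ j, AddCommGroup (A j)] [∀ j, Module R (A j)]
    {j j' : ℤ} (h : j = j') : A j →ₗ[R] A j' := by
  subst h; exact LinearMap.id

/-- The `i`-fold composite `u^i : E p q → E p (q + 2*i)` of the maps `u` in the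
second index. -/
def upow {E : ℤ → ℤ → Type*} [∀ p q, AddCommGroup (E p q)] [∀ p q, Module R (E p q)]
    (u : ∀ p q, E p q →ₗ[R] E p (q + 2)) (p : ℤ) :
    (i : ℕ) → (q : ℤ) → (E p q →ₗ[R] E p (q + 2 * i))
  | 0, q => castHom (E p) (by push_cast; ring)
  | (i + 1), q => (castHom (E p) (by push_cast; ring)).comp ((upow u p i (q + 2)).comp (u p q))

section Helpers

theorem castHom_self (A : ℤ → Type*) [∀ j, AddCommGroup (A j)] [∀ j, Module R (A j)]
    {j : ℤ} (h : j = j) (x : A j) : castHom (R := R) A h x = x := rfl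

/-- `u^i` as a map to any index equal to `q + 2 * i`. -/
def wpow {E : ℤ → ℤ → Type*} [∀ p q, AddCommGroup (E p q)] [∀ p q, Module R (E p q)]
    (u : ∀ p q, E p q →ₗ[R] E p (q + 2)) (p : ℤ) (i : ℕ) (q q' : ℤ) (h : q + 2 * i = q') :
    E p q →ₗ[R] E p q' :=
  (castHom (E p) h).comp (upow u p i q)

variable {E : ℤ → ℤ → Type*} [∀ p q, AddCommGroup (E p q)] [∀ p q, Module R (E p q)]
    (u : ∀ p q, E p q →ₗ[R] E p (q + 2))

theorem castHom_castHom (A : ℤ → Type*) [∀ j, AddCommGroup (A j)] [∀ j, Module R (A j)]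
    {j k l : ℤ} (h : j = k) (h' : k = l) (x : A j) :
    castHom (R := R) A h' (castHom (R := R) A h x) = castHom (R := R) A (h.trans h') x := by
  subst h; subst h'; rfl

theorem wpow_zero (p q : ℤ) (h : q + 2 * ((0 : ℕ) : ℤ) = q) (x : E p q) :
    wpow u p 0 q q h x = x := by
  simp only [wpow, upow, LinearMap.comp_apply]
  rw [castHom_castHom, castHom_self]

theorem wpow_succ (p : ℤ) (i : ℕ) (q q' : ℤ) (h : q + 2 * ((i + 1 : ℕ) : ℤ) = q')
    (h' : q + 2 + 2 * (i : ℤ) = q') (x : E p q) :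
    wpow u p (i + 1) q q' h x = wpow u p i (q + 2) q' h' (u p q x) := by
  simp only [wpow, upow, LinearMap.comp_apply]
  rw [castHom_castHom]

theorem wpow_cast (p : ℤ) (i : ℕ) (q q₁ q' : ℤ) (e : q = q₁) (h : q₁ + 2 * (i : ℤ) = q')
    (x : E p q) :
    wpow u p i q₁ q' h (castHom (R := R) (E p) e x) = wpow u p i q q' (by rw [e, h]) x := by
  subst e; rfl

theorem wpow_vanish_succ (p : ℤ) (i : ℕ) : ∀ (q q' q'' : ℤ) (h : q + 2 * (i : ℤ) = q')
    (h' : q + 2 * ((i + 1 : ℕ) : ℤ) = q'') (x : E p q),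
    wpow u p i q q' h x = 0 → wpow u p (i + 1) q q'' h' x = 0 := by
  induction i with
  | zero =>
    intro q q' q'' h h' x hx
    obtain rfl : q' = q := by simpa using h.symm
    rw [wpow_zero] at hx
    rw [hx, map_zero]
  | succ i ih =>
    intro q q' q'' h h' x hx
    rw [wpow_succ u p (i + 1) q q'' h' (by push_cast at h' ⊢; linarith)]
    rw [wpow_succ u p i q q' h (by push_cast at h ⊢; linarith)] at hx
    exact ih _ _ _ _ _ _ hx

theorem wpow_vanish (p : ℤ) (i k : ℕ) : ∀ (q q' q'' : ℤ) (h : q + 2 * (i : ℤ) = q')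
    (h' : q + 2 * ((i + k : ℕ) : ℤ) = q'') (x : E p q),
    wpow u p i q q' h x = 0 → wpow u p (i + k) q q'' h' x = 0 := by
  induction k with
  | zero =>
    intro q q' q'' h h' x hx
    subst h; subst h'; exact hx
  | succ k ih =>
    intro q q' q'' h h' x hx
    exact wpow_vanish_succ u p (i + k) q _ q'' rfl h' x (ih q q' _ h rfl x hx)

theorem wpow_bij (n : ℤ)
    (hiso : ∀ p : ℤ, ∀ i : ℕ, Function.Bijective ((castHom (E p)
      (show n - (i : ℤ) + 2 * (i : ℕ) = n + i by push_cast; ring)).comp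
        (upow u p i (n - i))))
    (p : ℤ) (i : ℕ) (q q' : ℤ) (h : q + 2 * (i : ℤ) = q') (hq : q = n - i) :
    Function.Bijective (wpow u p i q q' h) := by
  subst hq
  obtain rfl : q' = n + i := by linarith
  exact hiso p i

theorem wpow_d (r : ℤ) (d : ∀ p q, E p q →ₗ[R] E (p + r) (q - r + 1))
    (hcomm : ∀ p q : ℤ,
      (castHom (E (p + r)) (show q - r + 1 + 2 = q + 2 - r + 1 by ring)).comp
          ((u (p + r) (q - r + 1)).comp (d p q)) =
        (d p (q + 2)).comp (u p q)) (p : ℤ) (i : ℕ) :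
    ∀ (q q' : ℤ) (h : q + 2 * (i : ℤ) = q') (h' : q - r + 1 + 2 * (i : ℤ) = q' - r + 1)
      (x : E p q),
      d p q' (wpow u p i q q' h x) =
        wpow u (p + r) i (q - r + 1) (q' - r + 1) h' (d p q x) := by
  induction i with
  | zero =>
    intro q q' h h' x
    obtain rfl : q' = q := by simpa using h.symm
    rw [wpow_zero, wpow_zero]
  | succ i ih =>
    intro q q' h h' x
    rw [wpow_succ u p i q q' h (by push_cast at h ⊢; linarith),
      ih _ _ _ (by push_cast at h ⊢; linarith),
      wpow_succ u (p + r) i _ _ h' (by push_cast at h ⊢; linarith)]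
    have := LinearMap.congr_fun (hcomm p q) x
    simp only [LinearMap.comp_apply] at this
    rw [← this, wpow_cast]

end Helpers

theorem differentials_vanish
    {E : ℤ → ℤ → Type*} [∀ p q, AddCommGroup (E p q)] [∀ p q, Module R (E p q)]
    (a b : ℤ) (hbdd : ∀ p q : ℤ, q < a ∨ b < q → Subsingleton (E p q))
    (u : ∀ p q, E p q →ₗ[R] E p (q + 2)) (n : ℤ)
    (hiso : ∀ p : ℤ, ∀ i : ℕ, Function.Bijective ((castHom (E p)
      (show n - (i : ℤ) + 2 * (i : ℕ) = n + i by push_cast; ring)).comp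
        (upow u p i (n - i))))
    (r : ℤ) (hr : 2 ≤ r)
    (d : ∀ p q, E p q →ₗ[R] E (p + r) (q - r + 1))
    (hcomm : ∀ p q : ℤ,
      (castHom (E (p + r)) (show q - r + 1 + 2 = q + 2 - r + 1 by ring)).comp
          ((u (p + r) (q - r + 1)).comp (d p q)) =
        (d p (q + 2)).comp (u p q)) :
    ∀ p q : ℤ, d p q = 0 := by
  intro p
  have low : ∀ k : ℕ, ∀ q : ℤ, q < a + k → q ≤ n → d p q = 0 := by
    intro k
    induction k with
    | zero =>
      intro q hq _
      have := hbdd p q (Or.inl (by simpa using hq))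
      ext x
      rw [Subsingleton.elim x 0, map_zero, map_zero]
    | succ k ih =>
      intro q hq hqn
      obtain ⟨i, hi⟩ : ∃ i : ℕ, (i : ℤ) = n - q := ⟨(n - q).toNat, by omega⟩
      obtain ⟨m, hm⟩ : ∃ m : ℕ, (m : ℤ) = r - 2 := ⟨(r - 2).toNat, by omega⟩
      ext x
      -- the index `q - 2`
      obtain ⟨s, rfl⟩ : ∃ s : ℤ, q = s + 2 := ⟨q - 2, by ring⟩
      obtain ⟨y, hy⟩ := (wpow_bij u n hiso p (i + 2) s (s + 2 + 2 * ((i + 1 : ℕ) : ℤ))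
        (by push_cast; ring) (by push_cast; omega)).2
        (wpow u p (i + 1) (s + 2) _ rfl x)
      rw [wpow_succ u p (i + 1) s _ _ rfl] at hy
      have hprim : wpow u p (i + 1) (s + 2) _ rfl (x - u p s y) = 0 := by
        rw [map_sub, hy, sub_self]
      have hdy : d p (s + 2) (u p s y) = 0 := by
        have := LinearMap.congr_fun (hcomm p s) y
        simp only [LinearMap.comp_apply] at this
        rw [← this, ih s (by push_cast at hq; omega) (by omega)]
        simp
      have h1 := wpow_vanish u p (i + 1) m (s + 2) _ _ rfl rfl _ hprim
      have h2 := wpow_d u r d hcomm p (i + 1 + m) (s + 2) _ rfl (by ring) (x - u p s y)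
      rw [h1, map_zero] at h2
      have h3 := (wpow_bij u n hiso (p + r) (i + 1 + m) (s + 2 - r + 1) _ (by ring)
        (by push_cast; omega)).1 (h2.symm.trans (map_zero _).symm)
      rw [map_sub, hdy, sub_zero] at h3
      simpa using h3
  have low' : ∀ q : ℤ, q ≤ n → d p q = 0 := fun q hq =>
    low (q - a + 1).toNat q (by omega) hq
  intro q
  by_cases hq : q ≤ n
  · exact low' q hq
  · obtain ⟨i, hi⟩ : ∃ i : ℕ, (i : ℤ) = q - n := ⟨(q - n).toNat, by omega⟩
    ext x
    obtain ⟨y, rfl⟩ := (wpow_bij u n hiso p i (n - i) q (by omega) rfl).2 x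
    rw [wpow_d u r d hcomm p i _ _ _ (by omega), low' _ (by omega)]
    simp
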